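/- Two directed acyclic graphs on the same vertex set have the same skeleton and the same v-structures if and only if they are Markov equivalent, in the sense that they induce the same d-separation relations (equivalently, encode the same conditional independence structure). -/

import Mathlib

/-- The skeleton of a directed graph: `a` and `b` are adjacent. -/
def Skel {V : Type*} (d : V → V → Prop) (a b : V) : Prop := d a b ∨ d b a

/-- `b` is a collider on a trail at the consecutive triple `(a, b, c)`. -/
def Collider {V : Type*} (d : V → V → Prop) (a b c : V) : Prop := d a b ∧ d c b

/-- A trail from `x` to `y`: a list of distinct vertices starting at `x`, ending
at `y`, with consecutive vertices adjacent in the skeleton. -/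
def IsTrail {V : Type*} (d : V → V → Prop) (l : List V) (x y : V) : Prop :=
  l.head? = some x ∧ l.getLast? = some y ∧ l.Nodup ∧ l.Chain' (Skel d)

/-- A trail is blocked by `Z` if some consecutive triple `(a,b,c)` on it is a
collider with neither `b` nor any descendant of `b` in `Z`, or a non-collider
with `b ∈ Z`. -/
def Blocked {V : Type*} (d : V → V → Prop) (Z : Set V) (l : List V) : Prop :=
  ∃ a b c : V, [a, b, c] <:+: l ∧
    ((Collider d a b c ∧ ∀ s ∈ Z, ¬ Relation.ReflTransGen d b s) ∨
     (¬ Collider d a b c ∧ b ∈ Z))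

/-- `x` and `y` are d-separated given `Z`: every trail from `x` to `y` is
blocked by `Z`. -/
def DSep {V : Type*} (d : V → V → Prop) (Z : Set V) (x y : V) : Prop :=
  ∀ l : List V, IsTrail d l x y → Blocked d Z l

/-- A v-structure `a → b ← c` with `a, c` nonadjacent. -/
def VStruct {V : Type*} (d : V → V → Prop) (a b c : V) : Prop :=
  d a b ∧ d c b ∧ a ≠ c ∧ ¬ Skel d a c

namespace VP

open Relation

/-- ancestors of `T` -/
def An {V : Type*} (d : V → V → Prop) (T : Set V) : Set V := {v | ∃ t ∈ T, ReflTransGen d v t}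

def OK {V : Type*} (d : V → V → Prop) (Z : Set V) (a b c : V) : Prop :=
  (Collider d a b c → b ∈ An d Z) ∧ (¬ Collider d a b c → b ∉ Z)

/-- active walks -/
def Act {V : Type*} (d : V → V → Prop) (Z : Set V) : List V → Prop
  | [] => True
  | [_] => True
  | [a, b] => Skel d a b
  | a :: b :: c :: r => Skel d a b ∧ OK d Z a b c ∧ Act d Z (b :: c :: r)

def Ac {V : Type*} (d : V → V → Prop) : Prop := ∀ x, ¬ TransGen d x x

/-- moral edges inside `A` avoiding `Z` -/
def M {V : Type*} (d : V → V → Prop) (A Z : Set V) (a c : V) : Prop :=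
  a ∈ A ∧ c ∈ A ∧ a ∉ Z ∧ c ∉ Z ∧ a ≠ c ∧ (Skel d a c ∨ ∃ b ∈ A, VStruct d a b c)

variable {V : Type*} {d : V → V → Prop} {Z : Set V}

lemma Ac.irr (h : Ac d) (a : V) : ¬ d a a := fun e => h a (.single e)

lemma Ac.asymm (h : Ac d) {a b : V} (e : d a b) (f : d b a) : False :=
  h a (.head e (.single f))

lemma Ac.tri (h : Ac d) {a b c : V} (e : d a b) (f : d b c) (g : d c a) : False :=
  h a (.head e (.head f (.single g)))

lemma skel_symm {a b : V} (h : Skel d a b) : Skel d b a := Or.symm h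

lemma An_of {T : Set V} {a b : V} (h : d a b) (hb : b ∈ An d T) : a ∈ An d T := by
  obtain ⟨t, ht, p⟩ := hb
  exact ⟨t, ht, .head h p⟩

lemma An_of_rtg {T : Set V} {a b : V} (h : ReflTransGen d a b) (hb : b ∈ An d T) : a ∈ An d T := by
  obtain ⟨t, ht, p⟩ := hb
  exact ⟨t, ht, h.trans p⟩

lemma An_self {T : Set V} {a : V} (h : a ∈ T) : a ∈ An d T := ⟨a, h, .refl⟩

lemma not_blocked_iff (l : List V) :
    ¬ Blocked d Z l ↔ ∀ a b c, [a, b, c] <:+: l → OK d Z a b c := by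
  unfold Blocked OK An
  constructor
  · intro h a b c hi
    refine ⟨fun hc => ?_, fun hc hb => h ⟨a, b, c, hi, .inr ⟨hc, hb⟩⟩⟩
    by_contra hn
    refine h ⟨a, b, c, hi, .inl ⟨hc, fun s hs p => hn ⟨s, hs, p⟩⟩⟩
  · rintro h ⟨a, b, c, hi, ⟨hc, hn⟩ | ⟨hc, hb⟩⟩
    · obtain ⟨s, hs, p⟩ := (h a b c hi).1 hc
      exact hn s hs p
    · exact (h a b c hi).2 hc hb

lemma act_iff (l : List V) : Act d Z l ↔ l.IsChain (Skel d) ∧ ¬ Blocked d Z l := by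
  rw [not_blocked_iff]
  match l with
  | [] => simp [Act]
  | [x] =>
    simp only [Act, List.isChain_singleton, true_and, true_iff]
    intro a b c h
    have := h.length_le
    simp at this
  | [x, y] =>
    simp only [Act, List.isChain_pair, iff_self_and]
    intro _ a b c h
    have := h.length_le
    simp at this
  | x :: y :: z :: r =>
    have ih := act_iff (y :: z :: r)
    rw [not_blocked_iff] at ih
    rw [Act, ih, List.isChain_cons_cons (a := x)]
    constructor
    · rintro ⟨h1, h2, h3, h4⟩
      refine ⟨⟨h1, h3⟩, fun a b c h => ?_⟩
      rw [List.infix_cons_iff] at h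
      rcases h with h | h
      · simp at h
        obtain ⟨rfl, rfl, rfl⟩ := h
        exact h2
      · exact h4 a b c h
    · rintro ⟨⟨h1, h2⟩, h3⟩
      refine ⟨h1, h3 _ _ _ ?_, h2, fun a b c h => h3 a b c ?_⟩
      · exact ⟨[], r, by simp⟩
      · rw [List.infix_cons_iff]; exact .inr h

lemma act_infix {l l' : List V} (h : Act d Z l) (hi : l' <:+: l) : Act d Z l' := by
  rw [act_iff, not_blocked_iff] at *
  exact ⟨h.1.infix hi, fun a b c h' => h.2 a b c (h'.trans hi)⟩

lemma act_append (p : List V) (b : V) (r : List V) (h1 : Act d Z (p ++ [b])) (h2 : Act d Z (b :: r))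
    (h3 : ∀ a c, p.getLast? = some a → r.head? = some c → OK d Z a b c) : Act d Z (p ++ b :: r) := by
  match p with
  | [] => simpa using h2
  | [a] =>
    match r with
    | [] => simpa using h1
    | c :: r => exact ⟨by simpa [Act] using h1, h3 a c (by simp) (by simp), h2⟩
  | [a, a'] =>
    have ih := act_append [a'] b r (by simpa [Act] using h1.2.2) h2
      (fun u c hu hc => h3 u c (by simpa using hu) hc)
    exact ⟨h1.1, h1.2.1, ih⟩
  | a :: a' :: a'' :: p =>
    have ih := act_append (a' :: a'' :: p) b r h1.2.2 h2
      (fun u c hu hc => h3 u c (by simpa [List.getLast?_cons_cons] using hu) hc)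
    exact ⟨h1.1, h1.2.1, ih⟩

lemma act_fwd (hd : Ac d) (v w : V) (r : List V) (h : Act d Z (v :: w :: r)) (hvw : d v w) :
    w ∈ An d Z ∨ (v :: w :: r).IsChain d := by
  match r with
  | [] => right; simpa using hvw
  | c :: r =>
    obtain ⟨-, h2, h3⟩ := h
    by_cases hc : d c w
    · exact .inl (h2.1 ⟨hvw, hc⟩)
    · have hs : Skel d w c := by
        cases r with
        | nil => exact h3
        | cons => exact h3.1
      have hwc : d w c := hs.resolve_right hc
      rcases act_fwd hd w c r h3 hwc with h | h
      · exact .inl (An_of hwc h)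
      · right; rw [List.isChain_cons_cons]; exact ⟨hvw, h⟩

lemma chain_last (v y : V) (r : List V) (h : (v :: r).IsChain d)
    (hy : (v :: r).getLast? = some y) : ReflTransGen d v y := by
  induction r generalizing v with
  | nil => simp at hy; subst hy; exact .refl
  | cons w r ih =>
    rw [List.isChain_cons_cons] at h
    rw [List.getLast?_cons_cons] at hy
    exact .head h.1 (ih w h.2 hy)

lemma act_head {a b : V} {r : List V} (h : Act d Z (a :: b :: r)) : Skel d a b := by
  cases r with
  | nil => exact h
  | cons => exact h.1

lemma act_tail {a : V} {r : List V} (h : Act d Z (a :: r)) : Act d Z r :=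
  act_infix h ⟨[a], [], by simp⟩

/-- every vertex on an active walk is an ancestor -/
lemma act_mem_An (hd : Ac d) {T : Set V} (hZT : Z ⊆ T) (x y : V) (r : List V)
    (h : Act d Z (x :: r)) (hx : x ∈ An d T) (hy : y ∈ T)
    (hl : (x :: r).getLast? = some y) : ∀ v ∈ x :: r, v ∈ An d T := by
  induction r generalizing x with
  | nil => simpa using hx
  | cons b r ih =>
    have hb : b ∈ An d T := by
      rcases act_head h with e | e
      · rcases act_fwd hd x b r h e with ⟨s, hs, p⟩ | hc
        · exact ⟨s, hZT hs, p⟩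
        · rw [List.getLast?_cons_cons] at hl
          exact ⟨y, hy, chain_last b y r hc.tail hl⟩
      · obtain ⟨t, ht, p⟩ := hx
        exact ⟨t, ht, .head e p⟩
    intro v hv
    rw [List.mem_cons] at hv
    rcases hv with rfl | hv
    · exact hx
    · rw [List.getLast?_cons_cons] at hl
      exact ih b (act_tail h) hb hl v hv

lemma moral_of_act (hd : Ac d) {A : Set V} (x y : V) (r : List V) (h : Act d Z (x :: r))
    (hn : (x :: r).Nodup) (hA : ∀ v ∈ x :: r, v ∈ A) (hx : x ∉ Z) (hy : y ∉ Z)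
    (hl : (x :: r).getLast? = some y) : ReflTransGen (M d A Z) x y := by
  match r with
  | [] => simp at hl; subst hl; exact .refl
  | [b] =>
    simp at hl; subst hl
    refine .single ⟨hA _ (by simp), hA _ (by simp), hx, hy, ?_, .inl h⟩
    rintro rfl; simp at hn
  | b :: c :: r =>
    rw [List.getLast?_cons_cons] at hl
    by_cases hb : b ∈ Z
    · have hcol : Collider d x b c := by
        by_contra hc; exact h.2.1.2 hc hb
      have hc : c ∉ Z := by
        cases r with
        | nil => simp at hl; subst hl; exact hy
        | cons e r => exact h.2.2.2.1.2 (fun hh => hd.asymm hh.1 hcol.2)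
      have hxc : x ≠ c := by rintro rfl; simp at hn
      rw [List.getLast?_cons_cons] at hl
      refine .head (b := c) ⟨hA _ (by simp), hA _ (by simp), hx, hc, hxc, ?_⟩
        (moral_of_act hd c y r (act_tail (act_tail h)) hn.tail.tail
          (fun v hv => hA v (by simp at hv ⊢; tauto)) hc hy hl)
      by_cases hs : Skel d x c
      · exact .inl hs
      · exact .inr ⟨b, hA _ (by simp), hcol.1, hcol.2, hxc, hs⟩
    · refine .head (b := b) ⟨hA _ (by simp), hA _ (by simp), hx, hb, ?_, .inl h.1⟩
        (moral_of_act hd b y (c :: r) (act_tail h) hn.tail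
          (fun v hv => hA v (List.mem_cons_of_mem _ hv)) hb hy hl)
      rintro rfl; simp at hn

/-! loop removal -/

lemma dup_split (l : List V) (h : ¬ l.Nodup) : ∃ p b q r, l = p ++ b :: (q ++ b :: r) := by
  induction l with
  | nil => simp at h
  | cons a l ih =>
    by_cases ha : a ∈ l
    · obtain ⟨q, r, rfl⟩ := List.append_of_mem ha
      exact ⟨[], a, q, r, by simp⟩
    · rw [List.nodup_cons] at h
      obtain ⟨p, b, q, r, rfl⟩ := ih (fun hn => h ⟨ha, hn⟩)
      exact ⟨a :: p, b, q, r, by simp⟩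

lemma act_cut (hd : Ac d) (p : List V) (b : V) (q r : List V)
    (h : Act d Z (p ++ b :: (q ++ b :: r))) : Act d Z (p ++ b :: r) := by
  apply act_append
  · exact act_infix h ⟨[], q ++ b :: r, by simp⟩
  · exact act_infix h ⟨p ++ b :: q, [], by simp⟩
  intro a c ha hc
  obtain ⟨p, rfl⟩ : ∃ p', p = p' ++ [a] := by
    rw [List.getLast?_eq_some_iff] at ha; exact ha
  obtain ⟨r, rfl⟩ : ∃ r', r = c :: r' := by
    rw [List.head?_eq_some_iff] at hc; exact hc
  have hseg : Act d Z (b :: (q ++ b :: c :: r)) := act_infix h ⟨p ++ [a], [], by simp⟩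
  match q with
  | [] =>
    exfalso
    rcases act_head hseg with e | e <;> exact hd.irr _ e
  | q0 :: q =>
    have h1 : OK d Z a b q0 := by
      have : Act d Z [a, b, q0] := act_infix h ⟨p, q ++ b :: c :: r, by simp⟩
      exact this.2.1
    constructor
    · intro hcol
      by_cases hq : d q0 b
      · exact h1.1 ⟨hcol.1, hq⟩
      · have hbq : d b q0 := (act_head hseg).resolve_right hq
        rcases act_fwd hd _ _ _ hseg hbq with hh | hh
        · exact An_of hbq hh
        · exfalso
          have : [b, c].IsChain d := hh.infix ⟨b :: q0 :: q, r, by simp⟩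
          simp at this
          exact hd.asymm this hcol.2
    · intro hcol hb
      have hc1 : Collider d a b q0 := by by_contra hh; exact h1.2 hh hb
      obtain ⟨q', ql, hq'⟩ : ∃ q' ql, q0 :: q = q' ++ [ql] :=
        ⟨_, _, (List.dropLast_append_getLast (by simp)).symm⟩
      rw [hq'] at h
      have h2 : OK d Z ql b c := by
        have : Act d Z [ql, b, c] := act_infix h ⟨p ++ [a] ++ b :: q', r, by simp⟩
        exact this.2.1
      have hc2 : Collider d ql b c := by by_contra hh; exact h2.2 hh hb
      exact hcol ⟨hc1.1, hc2.2⟩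

lemma exists_trail (hd : Ac d) (n : ℕ) (l : List V) (hn : l.length ≤ n) (x y : V) (h : Act d Z l)
    (hx : l.head? = some x) (hy : l.getLast? = some y) :
    ∃ l', IsTrail d l' x y ∧ ¬ Blocked d Z l' := by
  induction n generalizing l with
  | zero => 
    have : l = [] := List.length_eq_zero_iff.1 (by omega)
    subst this; simp at hx
  | succ n ih =>
    by_cases hnd : l.Nodup
    · exact ⟨l, ⟨hx, hy, hnd, ((act_iff l).1 h).1⟩, ((act_iff l).1 h).2⟩
    · obtain ⟨p, b, q, r, rfl⟩ := dup_split l hnd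
      refine ih (p ++ b :: r) ?_ (act_cut hd p b q r h) ?_ ?_
      · simp at hn ⊢; omega
      · cases p <;> simpa using hx
      · simpa [List.getLast?_append, List.getLast?_cons] using hy

lemma dsep_symm_aux {x y : V} (h : DSep d Z x y) : DSep d Z y x := by
  rintro l ⟨h1, h2, h3, h4⟩
  obtain ⟨a, b, c, hi, hb⟩ := h l.reverse ⟨by simpa, by simpa, by simpa, by
    refine List.isChain_reverse.2 (List.IsChain.imp ?_ h4)
    intro a b h; exact skel_symm h⟩
  refine ⟨c, b, a, ?_, ?_⟩
  · have := List.reverse_infix.2 hi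
    simpa using this
  · have : Collider d c b a ↔ Collider d a b c := and_comm
    rw [this]; exact hb

/-! Bayes ball -/

/-- arrived at `v` from `x`, with tail at `v` -/
def S0 (d : V → V → Prop) (Z : Set V) (x v : V) : Prop :=
  ∃ l, Act d Z (v :: l) ∧ (v :: l).getLast? = some x ∧ ∀ u, l.head? = some u → d v u

/-- arrived at `v` from `x`, with arrow head at `v` -/
def S1 (d : V → V → Prop) (Z : Set V) (x v : V) : Prop :=
  ∃ l, Act d Z (v :: l) ∧ (v :: l).getLast? = some x ∧ ∀ u, l.head? = some u → d u v

lemma act_ext {c v : V} {l : List V} (hs : Skel d c v) (h : Act d Z (v :: l))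
    (hok : ∀ u, l.head? = some u → OK d Z c v u) : Act d Z (c :: v :: l) := by
  cases l with
  | nil => exact hs
  | cons u l => exact ⟨hs, hok u (by simp), h⟩

lemma S0_up (hd : Ac d) {x v c : V} (h : S0 d Z x v) (hv : v ∉ Z) (e : d c v) : S0 d Z x c := by
  obtain ⟨l, h1, h2, h3⟩ := h
  refine ⟨v :: l, act_ext (.inl e) h1 ?_, by rw [List.getLast?_cons_cons]; exact h2, ?_⟩
  · intro u hu
    exact ⟨fun hc => (hd.asymm hc.2 (h3 u hu)).elim, fun _ => hv⟩
  · intro u hu; simp at hu; subst hu; exact e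

lemma S_down (hd : Ac d) {x v c : V} (h : S0 d Z x v ∨ S1 d Z x v) (hv : v ∉ Z) (e : d v c) :
    S1 d Z x c := by
  have key : ∀ l, Act d Z (v :: l) → (v :: l).getLast? = some x → S1 d Z x c := by
    intro l h1 h2
    refine ⟨v :: l, act_ext (.inr e) h1 ?_, by rw [List.getLast?_cons_cons]; exact h2, ?_⟩
    · intro u hu
      exact ⟨fun hc => (hd.asymm hc.1 e).elim, fun _ => hv⟩
    · intro u hu; simp at hu; subst hu; exact e
  rcases h with ⟨l, h1, h2, -⟩ | ⟨l, h1, h2, -⟩ <;> exact key l h1 h2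

lemma S1_up {x v c : V} (h : S1 d Z x v) (hv : v ∈ An d Z) (e : d c v) : S0 d Z x c := by
  obtain ⟨l, h1, h2, h3⟩ := h
  refine ⟨v :: l, act_ext (.inl e) h1 ?_, by rw [List.getLast?_cons_cons]; exact h2, ?_⟩
  · intro u hu
    exact ⟨fun _ => hv, fun hc => (hc ⟨e, h3 u hu⟩).elim⟩
  · intro u hu; simp at hu; subst hu; exact e

lemma S0_refl (x : V) : S0 d Z x x := ⟨[], trivial, by simp, by simp⟩

lemma S0_anc (hd : Ac d) {x v : V} (p : ReflTransGen d v x) (hv : v ∉ An d Z) : S0 d Z x v := by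
  induction p using ReflTransGen.head_induction_on with
  | refl => exact S0_refl x
  | head e p ih =>
    have h' := fun h => hv (An_of e h)
    exact S0_up hd (ih h') (fun hz => h' (An_self hz)) e

lemma S1_anc (hd : Ac d) {x v y : V} (p : ReflTransGen d v y) (hv : v ∉ An d Z)
    (h : S1 d Z x v) : S1 d Z x y := by
  induction p using ReflTransGen.head_induction_on with
  | refl => exact h
  | head e p ih =>
    exact ih (fun h => hv (An_of e h)) (S_down hd (.inr h) (fun hz => hv (An_self hz)) e)

lemma S1_turn (hd : Ac d) {x y v c : V} (h : S1 d Z x v) (e : d c v)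
    (hv : v ∈ An d (insert x (insert y Z))) : S1 d Z x y ∨ S0 d Z x c := by
  by_cases hz : v ∈ An d Z
  · exact .inr (S1_up h hz e)
  · obtain ⟨t, ht, p⟩ := hv
    rcases ht with rfl | rfl | ht
    · exact .inr (S0_up hd (S0_anc hd p hz) (fun h => hz (An_self h)) e)
    · exact .inl (S1_anc hd p hz h)
    · exact (hz ⟨t, ht, p⟩).elim

lemma ball_of_moral (hd : Ac d) {x y z : V}
    (h : ReflTransGen (M d (An d (insert x (insert y Z))) Z) x z) :
    S0 d Z x y ∨ S1 d Z x y ∨ S0 d Z x z ∨ S1 d Z x z := by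
  induction h with
  | refl => exact .inr (.inr (.inl (S0_refl x)))
  | @tail z c _ e ih =>
    obtain ⟨hzA, hcA, hz, hc, hne, hs⟩ := e
    rcases ih with ih | ih | ih
    · exact .inl ih
    · exact .inr (.inl ih)
    · rcases hs with (hs | hs) | ⟨b, hb, hzb, hcb, -, -⟩
      · exact .inr (.inr (.inr (S_down hd ih hz hs)))
      · rcases ih with ih | ih
        · exact .inr (.inr (.inl (S0_up hd ih hz hs)))
        · rcases S1_turn hd ih hs hzA with h | h
          · exact .inr (.inl h)
          · exact .inr (.inr (.inl h))
      · rcases S1_turn hd (S_down hd ih hz hzb) hcb hb with h | h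
        · exact .inr (.inl h)
        · exact .inr (.inr (.inl h))

theorem dsep_iff_moral (hd : Ac d) {x y : V} (hx : x ∉ Z) (hy : y ∉ Z) :
    DSep d Z x y ↔ ¬ ReflTransGen (M d (An d (insert x (insert y Z))) Z) x y := by
  constructor
  · intro h hm
    have hb := ball_of_moral hd hm
    have : ∃ l, Act d Z (y :: l) ∧ (y :: l).getLast? = some x := by
      rcases hb with ⟨l, h1, h2, -⟩ | ⟨l, h1, h2, -⟩ | ⟨l, h1, h2, -⟩ | ⟨l, h1, h2, -⟩ <;>
        exact ⟨l, h1, h2⟩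
    obtain ⟨l, h1, h2⟩ := this
    obtain ⟨l', ht, hb⟩ := exists_trail hd _ _ le_rfl y x h1 (by simp) h2
    exact hb (dsep_symm_aux h l' ht)
  · rintro h l ⟨h1, h2, h3, h4⟩
    by_contra hb
    apply h
    have ha : Act d Z l := (act_iff l).2 ⟨h4, hb⟩
    obtain ⟨r, rfl⟩ : ∃ r, l = x :: r := by
      rw [List.head?_eq_some_iff] at h1; exact h1
    refine moral_of_act hd x y r ha h3 ?_ hx hy h2
    exact act_mem_An hd (fun z hz => by simp [hz]) x y r ha (An_self (by simp)) (by simp) h2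

/-! Elimination of vertices -/

lemma elim_step {d₁ d₂ : V → V → Prop} (h₁ : Ac d₁)
    (hs : ∀ a b, Skel d₁ a b ↔ Skel d₂ a b)
    (hv : ∀ a b c, VStruct d₁ a b c ↔ VStruct d₂ a b c)
    {A T : Set V} (hI : ∀ v ∈ A, v ∉ T → ∃ w ∈ A, d₁ v w) (hZ : Z ⊆ T) {x y v : V}
    (hxT : x ∈ T) (hyT : y ∈ T) (hvA : v ∈ A) (hvT : v ∉ T) (hsink : ∀ w ∈ A, ¬ d₂ v w)
    (hr : ReflTransGen (M d₁ A Z) x y) :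
    (∀ u ∈ A \ {v}, u ∉ T → ∃ w ∈ A \ {v}, d₁ u w) ∧
      ReflTransGen (M d₁ (A \ {v}) Z) x y := by
  obtain ⟨w, hwA, hvw⟩ := hI v hvA hvT
  have hin : ∀ u ∈ A, Skel d₁ u v → d₂ u v := fun u hu h =>
    ((hs u v).1 h).resolve_right (hsink u hu)
  have hwv : d₂ w v := hin w hwA (.inr hvw)
  have hne : w ≠ v := by rintro rfl; exact h₁.irr _ hvw
  have F : ∀ u ∈ A, d₁ u v → d₁ u w := by
    intro u hu huv
    have huw : u ≠ w := by rintro rfl; exact h₁.asymm huv hvw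
    have hsk : Skel d₁ u w := by
      by_contra hn
      have := (hv u v w).2 ⟨hin u hu (.inl huv), hwv, huw, fun h => hn ((hs u w).2 h)⟩
      exact h₁.asymm hvw this.2.1
    exact hsk.resolve_right (fun h => h₁.tri huv hvw h)
  have G : ∀ a c, M d₁ A Z a c → a ≠ v → c ≠ v → M d₁ (A \ {v}) Z a c := by
    rintro a c ⟨haA, hcA, haZ, hcZ, hac, h⟩ hav hcv
    refine ⟨⟨haA, hav⟩, ⟨hcA, hcv⟩, haZ, hcZ, hac, ?_⟩
    rcases h with h | ⟨b, hbA, hb⟩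
    · exact .inl h
    · by_cases hbv : b = v
      · subst hbv
        exact .inr ⟨w, ⟨hwA, hne⟩, F a haA hb.1, F c hcA hb.2.1, hb.2.2⟩
      · exact .inr ⟨b, ⟨hbA, hbv⟩, hb⟩
  constructor
  · rintro u ⟨huA, huv⟩ huT
    obtain ⟨w', hw', e⟩ := hI u huA huT
    by_cases hw'v : w' = v
    · subst hw'v; exact ⟨w, ⟨hwA, hne⟩, F u huA e⟩
    · exact ⟨w', ⟨hw', hw'v⟩, e⟩
  · have N : ∀ a, M d₁ A Z a v → Skel d₁ a v := by
      rintro a ⟨haA, -, -, -, hav, h | ⟨b, hbA, hb⟩⟩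
      · exact h
      · exact (hsink b hbA ((hv _ _ _).1 hb).2.1).elim
    have msymm : ∀ a c, M d₁ A Z a c → M d₁ A Z c a := by
      rintro a c ⟨haA, hcA, haZ, hcZ, hac, h⟩
      refine ⟨hcA, haA, hcZ, haZ, hac.symm, ?_⟩
      rcases h with h | ⟨b, hbA, h1, h2, h3, h4⟩
      · exact .inl h.symm
      · exact .inr ⟨b, hbA, h2, h1, h3.symm, fun h => h4 h.symm⟩
    have key : ∀ z, ReflTransGen (M d₁ A Z) x z →
        (z ≠ v → ReflTransGen (M d₁ (A \ {v}) Z) x z) ∧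
        (z = v → ∃ a, a ≠ v ∧ M d₁ A Z a v ∧ ReflTransGen (M d₁ (A \ {v}) Z) x a) := by
      intro z hz
      induction hz with
      | refl => exact ⟨fun _ => .refl, fun h => (hvT (h ▸ hxT)).elim⟩
      | @tail z c _ e ih =>
        by_cases hzv : z = v
        · subst hzv
          obtain ⟨a, hav, hm, hra⟩ := ih.2 rfl
          have hcz : c ≠ z := fun h => e.2.2.2.2.1 h.symm
          refine ⟨fun _ => ?_, fun h => (hcz h).elim⟩
          by_cases hac : a = c
          · exact hac ▸ hra
          · refine hra.tail (G a c ⟨hm.1, e.2.1, hm.2.2.1, e.2.2.2.1, hac, ?_⟩ hav hcz)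
            by_cases hsk : Skel d₁ a c
            · exact .inl hsk
            · refine .inr ⟨z, hvA, (hv _ _ _).2 ⟨hin a hm.1 (N a hm),
                hin c e.2.1 (N c (msymm _ _ e)), hac, fun h => hsk ((hs _ _).2 h)⟩⟩
        · refine ⟨fun hc => (ih.1 hzv).tail (G z c e hzv hc), ?_⟩
          rintro rfl
          exact ⟨z, hzv, e, ih.1 hzv⟩
    exact (key y hr).1 (by rintro rfl; exact hvT hyT)

lemma exists_sink [Finite V] (hd : Ac d) (B : Set V) (hB : B.Nonempty) :
    ∃ v ∈ B, ∀ w ∈ B, ¬ d v w := by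
  have : IsTrans V (fun a b => TransGen d b a) := ⟨fun a b c h1 h2 => h2.trans h1⟩
  have : Std.Irrefl (fun a b : V => TransGen d b a) := ⟨fun a h => hd a h⟩
  obtain ⟨v, hv, h⟩ := (Finite.wellFounded_of_trans_of_irrefl
    (fun a b : V => TransGen d b a)).has_min B hB
  exact ⟨v, hv, fun w hw e => h w hw (.single e)⟩

lemma elim_all [Finite V] {d₁ d₂ : V → V → Prop} (h₁ : Ac d₁) (h₂ : Ac d₂)
    (hs : ∀ a b, Skel d₁ a b ↔ Skel d₂ a b)
    (hv : ∀ a b c, VStruct d₁ a b c ↔ VStruct d₂ a b c)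
    {T : Set V} (hZ : Z ⊆ T) {x y : V} (hxT : x ∈ T) (hyT : y ∈ T) (n : ℕ)
    (A : Set V) (hn : A.ncard ≤ n) (hI : ∀ v ∈ A, v ∉ T → ∃ w ∈ A, d₁ v w)
    (hr : ReflTransGen (M d₁ A Z) x y) : ReflTransGen (M d₂ (An d₂ T) Z) x y := by
  induction n generalizing A with
  | zero =>
    have : A = ∅ := (Set.ncard_eq_zero A.toFinite).1 (by omega)
    subst this
    have : x = y := by
      rcases ReflTransGen.cases_head hr with h | ⟨c, h, -⟩
      · exact h
      · exact h.1.elim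
    subst this; exact .refl
  | succ n ih =>
    by_cases hA : A ⊆ An d₂ T
    · refine ReflTransGen.mono ?_ _ _ hr
      rintro a c ⟨haA, hcA, haZ, hcZ, hac, h⟩
      refine ⟨hA haA, hA hcA, haZ, hcZ, hac, ?_⟩
      rcases h with h | ⟨b, hbA, hb⟩
      · exact .inl ((hs _ _).1 h)
      · exact .inr ⟨b, hA hbA, (hv _ _ _).1 hb⟩
    · obtain ⟨v, ⟨hvA, hvn⟩, hsink⟩ := exists_sink h₂ (A \ An d₂ T) (Set.sdiff_nonempty.2 hA)
      have hvT : v ∉ T := fun h => hvn (An_self h)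
      obtain ⟨hI', hr'⟩ := elim_step h₁ hs hv hI hZ hxT hyT hvA hvT
        (fun w hw e => hsink w ⟨hw, fun h => hvn (An_of e h)⟩ e) hr
      refine ih (A \ {v}) ?_ hI' hr'
      have := Set.ncard_sdiff_singleton_add_one hvA A.toFinite
      omega

lemma forward [Finite V] {d₁ d₂ : V → V → Prop} (h₁ : Ac d₁) (h₂ : Ac d₂)
    (hs : ∀ a b, Skel d₁ a b ↔ Skel d₂ a b)
    (hv : ∀ a b c, VStruct d₁ a b c ↔ VStruct d₂ a b c) {x y : V} (hx : x ∉ Z) (hy : y ∉ Z)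
    (h : DSep d₂ Z x y) : DSep d₁ Z x y := by
  rw [dsep_iff_moral h₂ hx hy] at h
  rw [dsep_iff_moral h₁ hx hy]
  refine fun hr => h (elim_all h₁ h₂ hs hv (fun z hz => by simp [hz]) (by simp) (by simp) _ _ le_rfl
    ?_ hr)
  rintro v ⟨t, ht, p⟩ hvT
  rcases ReflTransGen.cases_head p with rfl | ⟨w, e, p⟩
  · exact (hvT ht).elim
  · exact ⟨w, ⟨t, ht, p⟩, e⟩

/-! Converse -/

lemma sep_parents (hd : Ac d) {x y : V} (hne : x ≠ y) (hs : ¬ Skel d x y)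
    (hyx : ¬ ReflTransGen d y x) : DSep d {p | d p y} y x := by
  rintro l ⟨h1, h2, h3, h4⟩
  by_contra hb
  have ha : Act d {p | d p y} l := (act_iff l).2 ⟨h4, hb⟩
  obtain ⟨r, rfl⟩ : ∃ r, l = y :: r := by
    rw [List.head?_eq_some_iff] at h1; exact h1
  match r with
  | [] => simp at h2; exact hne h2.symm
  | p :: r =>
    rcases act_head ha with e | e
    · rcases act_fwd hd y p r ha e with ⟨s, hs', q⟩ | hc
      · exact hd y ((TransGen.head' e q).tail hs')
      · exact hyx (chain_last y x _ hc h2)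
    · match r with
      | [] => simp at h2; subst h2; exact hs (.inl e)
      | c :: r => exact ha.2.1.2 (fun hc => hd.asymm hc.1 e) e

lemma exists_sep (hd : Ac d) {x y : V} (hne : x ≠ y) (hs : ¬ Skel d x y) :
    ∃ Z : Set V, x ∉ Z ∧ y ∉ Z ∧ DSep d Z x y := by
  by_cases hyx : ReflTransGen d y x
  · have hxy : ¬ ReflTransGen d x y := by
      intro h
      rcases ReflTransGen.cases_head h with h | ⟨c, e, p⟩
      · exact hne h
      · exact hd x (.head' e (p.trans hyx))
    exact ⟨{p | d p x}, hd.irr x, fun h => hs (.inr h),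
      sep_parents hd hne.symm (fun h => hs h.symm) hxy⟩
  · exact ⟨{p | d p y}, fun h => hs (.inl h), hd.irr y,
      dsep_symm_aux (sep_parents hd hne hs hyx)⟩

lemma not_sep_of_act {x y : V} (l : List V) (h : Act d Z l) (hn : l.Nodup) (hx : l.head? = some x)
    (hy : l.getLast? = some y) : ¬ DSep d Z x y := fun hd =>
  ((act_iff l).1 h).2 (hd l ⟨hx, hy, hn, ((act_iff l).1 h).1⟩)

lemma skel_ne (hd : Ac d) {x y : V} (h : Skel d x y) : x ≠ y := by
  rintro rfl; rcases h with h | h <;> exact hd.irr _ h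

lemma not_sep_of_skel (hd : Ac d) {x y : V} (h : Skel d x y) : ¬ DSep d Z x y :=
  not_sep_of_act [x, y] h (by simp [skel_ne hd h]) (by simp) (by simp)

lemma skel_of {d₁ d₂ : V → V → Prop} (h₁ : Ac d₁) (h₂ : Ac d₂)
    (h : ∀ (Z : Set V) (x y : V), x ≠ y → x ∉ Z → y ∉ Z → (DSep d₁ Z x y ↔ DSep d₂ Z x y))
    {a b : V} (hs : Skel d₁ a b) : Skel d₂ a b := by
  by_contra hn
  obtain ⟨Z, ha, hb, hsep⟩ := exists_sep h₂ (skel_ne h₁ hs) hn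
  exact not_sep_of_skel h₁ hs ((h Z a b (skel_ne h₁ hs) ha hb).2 hsep)

lemma vstruct_of {d₁ d₂ : V → V → Prop} (h₁ : Ac d₁)
    (h : ∀ (Z : Set V) (x y : V), x ≠ y → x ∉ Z → y ∉ Z → (DSep d₁ Z x y ↔ DSep d₂ Z x y))
    (hs : ∀ a b, Skel d₁ a b ↔ Skel d₂ a b)
    {a b c : V} (hv : VStruct d₁ a b c) : VStruct d₂ a b c := by
  obtain ⟨hab, hcb, hac, hn⟩ := hv
  obtain ⟨Z, ha, hc, hsep⟩ := exists_sep h₁ hac hn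
  have n1 : a ≠ b := skel_ne h₁ (.inl hab)
  have n2 : b ≠ c := skel_ne h₁ (.inr hcb)
  have hnd : [a, b, c].Nodup := by simp [n1, n2, hac]
  have hb : b ∉ Z := fun hb => not_sep_of_act (Z := Z) [a, b, c]
    ⟨.inl hab, ⟨fun _ => An_self hb, fun hh => (hh ⟨hab, hcb⟩).elim⟩, .inr hcb⟩ hnd
    (by simp) (by simp) hsep
  by_cases hcol : Collider d₂ a b c
  · exact ⟨hcol.1, hcol.2, hac, fun h => hn ((hs _ _).2 h)⟩
  · exfalso
    exact not_sep_of_act (Z := Z) [a, b, c]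
      ⟨(hs _ _).1 (.inl hab), ⟨fun hh => (hcol hh).elim, fun _ => hb⟩, (hs _ _).1 (.inr hcb)⟩ hnd
      (by simp) (by simp) ((h Z a c hac ha hc).1 hsep)

end VP

/-- Verma–Pearl: two DAGs on the same finite vertex set are Markov equivalent
(induce the same d-separation relations) if and only if they have the same
skeleton and the same v-structures. -/
theorem stmt11 {V : Type*} [Fintype V] (d₁ d₂ : V → V → Prop)
    (h₁ : ∀ x, ¬ Relation.TransGen d₁ x x)
    (h₂ : ∀ x, ¬ Relation.TransGen d₂ x x) :
    ((∀ a b, Skel d₁ a b ↔ Skel d₂ a b) ∧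
       (∀ a b c, VStruct d₁ a b c ↔ VStruct d₂ a b c)) ↔
    (∀ (Z : Set V) (x y : V), x ≠ y → x ∉ Z → y ∉ Z →
       (DSep d₁ Z x y ↔ DSep d₂ Z x y)) := by
  constructor
  · rintro ⟨hs, hv⟩ Z x y - hx hy
    exact ⟨VP.forward h₂ h₁ (fun a b => (hs a b).symm) (fun a b c => (hv a b c).symm) hx hy,
      VP.forward h₁ h₂ hs hv hx hy⟩
  · intro h
    have h' : ∀ (Z : Set V) (x y : V), x ≠ y → x ∉ Z → y ∉ Z →
        (DSep d₂ Z x y ↔ DSep d₁ Z x y) := fun Z x y a b c => (h Z x y a b c).symm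
    have hs : ∀ a b, Skel d₁ a b ↔ Skel d₂ a b := fun a b =>
      ⟨VP.skel_of h₁ h₂ h, VP.skel_of h₂ h₁ h'⟩
    exact ⟨hs, fun a b c => ⟨VP.vstruct_of h₁ h hs,
      VP.vstruct_of h₂ h' (fun a b => (hs a b).symm)⟩⟩
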